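/- Let $A$ be an $m\times m$ matrix with real entries, $m\ge 1$; its eigenvalues are the roots of its characteristic polynomial over $\mathbb{C}$. For an eigenvalue $\mu_j$ of $A$, $n\in\mathbb{Z}$ and $t\in(-1,1]$ put $\mu_{n,j}(t)=(2n+t)^2+\mu_j$. Let $\mu_j$ and $\mu_i$ be real eigenvalues of $A$, let $k$ be a positive integer, let $\delta>0$, and let $t\in(-1,1]$. Define $$U(j,k,i,-k,\delta)=\left(\frac{\mu_i-\mu_j-\delta}{8k},\ \frac{\mu_i-\mu_j+\delta}{8k}\right),$$ $$U(j,k,i,-k-1,\delta)=\left(1+\frac{\mu_i-\mu_j-\delta}{4(2k+1)},\ 1+\frac{\mu_i-\mu_j+\delta}{4(2k+1)}\right),$$ $$U(j,k,i,-k+1,\delta)=\left(-1+\frac{\mu_i-\mu_j-\delta}{4(2k-1)},\ -1+\frac{\mu_i-\mu_j+\delta}{4(2k-1)}\right).$$ If $t\notin U(j,k,i,-k,\delta)$ then $|\mu_{k,j}(t)-\mu_{-k,i}(t)|\ge\delta$; if $t\notin U(j,k,i,-k-1,\delta)$ then $|\mu_{k,j}(t)-\mu_{-k-1,i}(t)|\ge\delta$;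 and if $t\notin U(j,k,i,-k+1,\delta)$ then $|\mu_{k,j}(t)-\mu_{-k+1,i}(t)|\ge\delta$. Consequently, for $\varepsilon,\varepsilon'>0$ with $\varepsilon+\varepsilon'\le\delta$ and $n\in\{-k,-k-1,-k+1\}$, the closed disks $\{z\in\mathbb{C}:|z-\mu_{k,j}(t)|\le\varepsilon\}$ and $\{z\in\mathbb{C}:|z-\mu_{n,i}(t)|\le\varepsilon'\}$ are disjoint whenever $t\notin U(j,k,i,n,\delta)$, except possibly when $\varepsilon+\varepsilon'=\delta$ and $t$ is an endpoint of $U(j,k,i,n,\delta)$. Moreover, if $\mu_l$ is a nonreal eigenvalue of $A$ with $\delta<|\operatorname{Im}\mu_l|$, then for every $n\in\mathbb{Z}$, every $t\in(-1,1]$ and all $\varepsilon,\varepsilon'>0$ with $\varepsilon+\varepsilon'\le\delta$, the closed disks $\{z\in\mathbb{C}:|z-\mu_{k,j}(t)|\le\varepsilon\}$ and $\{z\in\mathbb{C}:|z-((2n+t)^2+\mu_l)|\le\varepsilon'\}$ are disjoint. -/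

import Mathlib

/-- `μ ∈ ℂ` is an eigenvalue of the real matrix `A`, i.e. a root of its characteristic
polynomial over `ℂ`. -/
def IsEigOfReal {m : ℕ} (A : Matrix (Fin m) (Fin m) ℝ) (μ : ℂ) : Prop :=
  (A.map Complex.ofReal).charpoly.IsRoot μ

/-- `μ_n(t) = (2n+t)² + μ`. -/
noncomputable def bandValue (n : ℤ) (μ : ℂ) (t : ℝ) : ℂ :=
  (2 * (n : ℂ) + (t : ℂ)) ^ 2 + μ

/-- The open interval `U(j,k,i,-k,δ)`. -/
noncomputable def excNeg (μj μi : ℝ) (k : ℤ) (δ : ℝ) : Set ℝ :=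
  Set.Ioo ((μi - μj - δ) / (8 * (k : ℝ))) ((μi - μj + δ) / (8 * (k : ℝ)))

/-- The open interval `U(j,k,i,-k-1,δ)`. -/
noncomputable def excNegSubOne (μj μi : ℝ) (k : ℤ) (δ : ℝ) : Set ℝ :=
  Set.Ioo (1 + (μi - μj - δ) / (4 * (2 * (k : ℝ) + 1)))
    (1 + (μi - μj + δ) / (4 * (2 * (k : ℝ) + 1)))

/-- The open interval `U(j,k,i,-k+1,δ)`. -/
noncomputable def excNegAddOne (μj μi : ℝ) (k : ℤ) (δ : ℝ) : Set ℝ :=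
  Set.Ioo (-1 + (μi - μj - δ) / (4 * (2 * (k : ℝ) - 1)))
    (-1 + (μi - μj + δ) / (4 * (2 * (k : ℝ) - 1)))

/-!
For distinct bands `n ≠ p` over real `μ`, `ν` the difference of the band values is
`4 (n - p) (n + p + t) + μ - ν`: the squares of `t` cancel, so it is affine in `t`, of slope
`4 (n - p)`. Its modulus is therefore less than `δ` exactly on the open interval of radius
`δ / (4 |n - p|)` around its zero, and each exceptional interval `U` is this one for a suitable `p`.
For nonreal `ν`, all band values over `ν` have imaginary part `ν.im`, while those over a real `μ`
are real.
-/

/-- The parameter `t` at which the bands `(2n+t)² + μ` and `(2p+t)² + ν` take the same value. It has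
this meaning for `n ≠ p` only. -/
noncomputable def crossingPoint (n p : ℤ) (μ ν : ℝ) : ℝ :=
  -(n + p) + (ν - μ) / (4 * (n - p))

/-- The exceptional interval of a pair of bands `n ≠ p`: the parameters `t` at which `(2n+t)² + μ`
and `(2p+t)² + ν` are less than `δ` apart. It is given as a ball so that the sign of `n - p` does
not matter; for `n = p` the radius is `δ / 0 = 0` and the set is empty. -/
noncomputable def crossingInterval (n p : ℤ) (μ ν δ : ℝ) : Set ℝ :=
  Metric.ball (crossingPoint n p μ ν) (δ / (4 * |(n : ℝ) - p|))

section Crossing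

variable {n p : ℤ}

theorem bandValue_sub_bandValue (hnp : n ≠ p) (μ ν t : ℝ) :
    bandValue n μ t - bandValue p ν t =
      ((4 * (n - p) * (t - crossingPoint n p μ ν) : ℝ) : ℂ) := by
  have hnp' : (n : ℂ) - p ≠ 0 := sub_ne_zero.mpr (Int.cast_injective.ne hnp)
  simp only [bandValue, crossingPoint]
  push_cast
  field_simp
  ring

theorem norm_bandValue_sub_bandValue (hnp : n ≠ p) (μ ν t : ℝ) :
    ‖bandValue n μ t - bandValue p ν t‖ =
      dist t (crossingPoint n p μ ν) * (4 * |(n : ℝ) - p|) := by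
  rw [bandValue_sub_bandValue hnp, Complex.norm_real, Real.norm_eq_abs, abs_mul, abs_mul,
    abs_of_pos four_pos, Real.dist_eq, mul_comm]

theorem four_mul_abs_intCast_sub_pos (hnp : n ≠ p) : 0 < 4 * |(n : ℝ) - p| :=
  mul_pos four_pos (abs_sub_pos.mpr (Int.cast_injective.ne hnp))

theorem mem_crossingInterval (hnp : n ≠ p) {μ ν δ t : ℝ} :
    t ∈ crossingInterval n p μ ν δ ↔ ‖bandValue n μ t - bandValue p ν t‖ < δ := by
  rw [crossingInterval, Metric.mem_ball, lt_div_iff₀ (four_mul_abs_intCast_sub_pos hnp),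
    norm_bandValue_sub_bandValue hnp]

theorem mem_closure_crossingInterval (hnp : n ≠ p) {μ ν δ t : ℝ} (hδ : δ ≠ 0) :
    t ∈ closure (crossingInterval n p μ ν δ) ↔
      ‖bandValue n μ t - bandValue p ν t‖ ≤ δ := by
  have hpos := four_mul_abs_intCast_sub_pos hnp
  rw [crossingInterval, closure_ball _ (div_ne_zero hδ hpos.ne'), Metric.mem_closedBall,
    le_div_iff₀ hpos, norm_bandValue_sub_bandValue hnp]

theorem le_norm_bandValue_sub_of_notMem_crossingInterval (hnp : n ≠ p) {μ ν δ t : ℝ}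
    (ht : t ∉ crossingInterval n p μ ν δ) :
    δ ≤ ‖bandValue n μ t - bandValue p ν t‖ :=
  not_lt.mp (mt (mem_crossingInterval hnp).mpr ht)

theorem disjoint_closedBall_of_notMem_crossingInterval (hnp : n ≠ p) {μ ν δ t ε ε' : ℝ}
    (hδ : δ ≠ 0) (hε : ε + ε' ≤ δ) (ht : t ∉ crossingInterval n p μ ν δ)
    (hend : ε + ε' < δ ∨ t ∉ closure (crossingInterval n p μ ν δ)) :
    Disjoint (Metric.closedBall (bandValue n μ t) ε) (Metric.closedBall (bandValue p ν t) ε') := by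
  apply Metric.closedBall_disjoint_closedBall
  rw [dist_eq_norm]
  rcases hend with hlt | hcl
  · exact hlt.trans_le (le_norm_bandValue_sub_of_notMem_crossingInterval hnp ht)
  · exact hε.trans_lt (not_le.mp (mt (mem_closure_crossingInterval hnp hδ).mpr hcl))

theorem crossingInterval_eq_Ioo (hpn : p < n) (μ ν δ : ℝ) :
    crossingInterval n p μ ν δ =
      Set.Ioo (-(n + p) + (ν - μ - δ) / (4 * (n - p)))
        (-(n + p) + (ν - μ + δ) / (4 * (n - p))) := by
  have hpos : (0 : ℝ) < n - p := sub_pos.mpr (Int.cast_lt.mpr hpn)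
  rw [crossingInterval, crossingPoint, Real.ball_eq_Ioo, abs_of_pos hpos, add_sub_assoc,
    ← sub_div, add_assoc, ← add_div]

end Crossing

section ExceptionalIntervals

variable {k : ℤ}

theorem excNeg_eq_crossingInterval (hk : 0 < k) (μ ν δ : ℝ) :
    excNeg μ ν k δ = crossingInterval k (-k) μ ν δ := by
  rw [excNeg, crossingInterval_eq_Ioo (by lia)]
  push_cast
  congr 1 <;> ring

theorem excNegSubOne_eq_crossingInterval (hk : 0 ≤ k) (μ ν δ : ℝ) :
    excNegSubOne μ ν k δ = crossingInterval k (-k - 1) μ ν δ := by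
  rw [excNegSubOne, crossingInterval_eq_Ioo (by lia)]
  push_cast
  congr 1 <;> ring

theorem excNegAddOne_eq_crossingInterval (hk : 0 < k) (μ ν δ : ℝ) :
    excNegAddOne μ ν k δ = crossingInterval k (-k + 1) μ ν δ := by
  rw [excNegAddOne, crossingInterval_eq_Ioo (by lia)]
  push_cast
  congr 1 <;> ring

end ExceptionalIntervals

theorem im_bandValue (n : ℤ) (μ : ℂ) (t : ℝ) : (bandValue n μ t).im = μ.im := by
  simp [bandValue, pow_two]

theorem abs_im_sub_im_le_dist_bandValue (n p : ℤ) (μ ν : ℂ) (t : ℝ) :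
    |μ.im - ν.im| ≤ dist (bandValue n μ t) (bandValue p ν t) := by
  simpa only [dist_eq_norm, Complex.sub_im, im_bandValue] using
    Complex.abs_im_le_norm (bandValue n μ t - bandValue p ν t)

theorem disjoint_closedBall_bandValue_of_lt_abs_im_sub {μ ν : ℂ} {ε ε' : ℝ}
    (hε : ε + ε' < |μ.im - ν.im|) (n p : ℤ) (t : ℝ) :
    Disjoint (Metric.closedBall (bandValue n μ t) ε) (Metric.closedBall (bandValue p ν t) ε') :=
  Metric.closedBall_disjoint_closedBall
    (hε.trans_le (abs_im_sub_im_le_dist_bandValue n p μ ν t))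

theorem statement12_general (μj : ℝ) {k : ℤ} (hk : 0 < k) {δ : ℝ} (hδ : 0 < δ) (t : ℝ) :
    (∀ μi : ℝ,
      ((t ∉ excNeg μj μi k δ →
          δ ≤ ‖bandValue k μj t - bandValue (-k) μi t‖) ∧
        (t ∉ excNegSubOne μj μi k δ →
          δ ≤ ‖bandValue k μj t - bandValue (-k - 1) μi t‖) ∧
        (t ∉ excNegAddOne μj μi k δ →
          δ ≤ ‖bandValue k μj t - bandValue (-k + 1) μi t‖)) ∧
      (∀ ε ε' : ℝ, ε + ε' ≤ δ →
        (t ∉ excNeg μj μi k δ → (ε + ε' < δ ∨ t ∉ closure (excNeg μj μi k δ)) →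
          Disjoint (Metric.closedBall (bandValue k μj t) ε)
            (Metric.closedBall (bandValue (-k) μi t) ε')) ∧
        (t ∉ excNegSubOne μj μi k δ → (ε + ε' < δ ∨ t ∉ closure (excNegSubOne μj μi k δ)) →
          Disjoint (Metric.closedBall (bandValue k μj t) ε)
            (Metric.closedBall (bandValue (-k - 1) μi t) ε')) ∧
        (t ∉ excNegAddOne μj μi k δ → (ε + ε' < δ ∨ t ∉ closure (excNegAddOne μj μi k δ)) →
          Disjoint (Metric.closedBall (bandValue k μj t) ε)
            (Metric.closedBall (bandValue (-k + 1) μi t) ε')))) ∧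
    (∀ μ' : ℂ, δ < |μ'.im| →
      ∀ ε ε' : ℝ, ε + ε' ≤ δ → ∀ n : ℤ,
        Disjoint (Metric.closedBall (bandValue k μj t) ε)
          (Metric.closedBall (bandValue n μ' t) ε')) := by
  obtain ⟨hneg, hsub, hadd⟩ : k ≠ -k ∧ k ≠ -k - 1 ∧ k ≠ -k + 1 := by lia
  simp only [excNeg_eq_crossingInterval hk, excNegSubOne_eq_crossingInterval hk.le,
    excNegAddOne_eq_crossingInterval hk]
  refine ⟨fun μi => ⟨⟨?_, ?_, ?_⟩, fun ε ε' hε => ⟨?_, ?_, ?_⟩⟩, fun μ' hμ' ε ε' hε n => ?_⟩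
  · exact le_norm_bandValue_sub_of_notMem_crossingInterval hneg
  · exact le_norm_bandValue_sub_of_notMem_crossingInterval hsub
  · exact le_norm_bandValue_sub_of_notMem_crossingInterval hadd
  · exact disjoint_closedBall_of_notMem_crossingInterval hneg hδ.ne' hε
  · exact disjoint_closedBall_of_notMem_crossingInterval hsub hδ.ne' hε
  · exact disjoint_closedBall_of_notMem_crossingInterval hadd hδ.ne' hε
  · apply disjoint_closedBall_bandValue_of_lt_abs_im_sub
    simpa only [Complex.ofReal_im, zero_sub, abs_neg] using hε.trans_lt hμ'

/-- Separation of `μ_{k,j}(t)` from `μ_{n,i}(t)`, `n ∈ {-k, -k-1, -k+1}`, when `t` avoids the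
exceptional interval, and disjointness of the corresponding closed disks. The only case left out
of the disk claim is `ε + ε' = δ` with `t` an endpoint of the interval, where the two closed disks
are tangent. The last clause concerns the disks around `(2n+t)² + μ'` for nonreal eigenvalues
`μ'`. -/
theorem statement12 {m : ℕ} (hm : 1 ≤ m) (A : Matrix (Fin m) (Fin m) ℝ)
    (μj : ℝ) (hμj : IsEigOfReal A (μj : ℂ))
    (k : ℤ) (hk : 0 < k) (δ : ℝ) (hδ : 0 < δ)
    (t : ℝ) (ht : t ∈ Set.Ioc (-1 : ℝ) 1) :
    (∀ μi : ℝ, IsEigOfReal A (μi : ℂ) →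
      ((t ∉ excNeg μj μi k δ →
          δ ≤ ‖bandValue k μj t - bandValue (-k) μi t‖) ∧
        (t ∉ excNegSubOne μj μi k δ →
          δ ≤ ‖bandValue k μj t - bandValue (-k - 1) μi t‖) ∧
        (t ∉ excNegAddOne μj μi k δ →
          δ ≤ ‖bandValue k μj t - bandValue (-k + 1) μi t‖)) ∧
      (∀ ε ε' : ℝ, 0 < ε → 0 < ε' → ε + ε' ≤ δ →
        (t ∉ excNeg μj μi k δ → (ε + ε' < δ ∨ t ∉ closure (excNeg μj μi k δ)) →
          Disjoint (Metric.closedBall (bandValue k μj t) ε)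
            (Metric.closedBall (bandValue (-k) μi t) ε')) ∧
        (t ∉ excNegSubOne μj μi k δ → (ε + ε' < δ ∨ t ∉ closure (excNegSubOne μj μi k δ)) →
          Disjoint (Metric.closedBall (bandValue k μj t) ε)
            (Metric.closedBall (bandValue (-k - 1) μi t) ε')) ∧
        (t ∉ excNegAddOne μj μi k δ → (ε + ε' < δ ∨ t ∉ closure (excNegAddOne μj μi k δ)) →
          Disjoint (Metric.closedBall (bandValue k μj t) ε)
            (Metric.closedBall (bandValue (-k + 1) μi t) ε')))) ∧
    (∀ μ' : ℂ, IsEigOfReal A μ' → μ'.im ≠ 0 → δ < |μ'.im| →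
      ∀ ε ε' : ℝ, 0 < ε → 0 < ε' → ε + ε' ≤ δ → ∀ n : ℤ,
        Disjoint (Metric.closedBall (bandValue k μj t) ε)
          (Metric.closedBall (bandValue n μ' t) ε')) := by
  obtain ⟨hreal, hnonreal⟩ := statement12_general μj hk hδ t
  exact ⟨fun μi _ => ⟨(hreal μi).1, fun ε ε' _ _ => (hreal μi).2 ε ε'⟩,
    fun μ' _ _ hμ' ε ε' _ _ => hnonreal μ' hμ' ε ε'⟩
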